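/- Define I(x) = ∫_0^x e^{u²/2} · erf(u/√2) du for real x. Then for every real number S and every integer n ≥ 0, the improper integral (1/√(2π)) ∫_{-∞}^∞ [exp(η·S - η²·n/2) - 1] · e^{-η²/2} dη/|η| converges and equals I(S/√(n+1)) - (1/√(2π))·ln(1+n). Moreover I(x) ≥ 0 for all x, so this quantity is at least -(1/√(2π))·ln(1+n). -/

import Mathlib

/-!
For `a, b > 0` let `F s = ∫ (exp (s t - a t² / 2) - exp (-b t² / 2)) / |t| dt`. Differentiating
under the integral cancels the singularity: `F' s = ∫ sign t · exp (s t - a t² / 2) dt`, and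
completing the square turns this into an error function, so `F s - F 0 = √(2π) I (s / √a)`.
The constant `F 0 = log (b / a)` is a Frullani integral. The theorem is the case `a = n + 1`,
`b = 1`.
-/

open MeasureTheory Real

/-- The Gauss error function `erf z = (2/√π) ∫_0^z e^{-t²} dt`. -/
noncomputable def erf (z : ℝ) : ℝ := (2 / Real.sqrt π) * ∫ t in (0 : ℝ)..z, Real.exp (-t ^ 2)

/-- The function `I x = ∫_0^x e^{u²/2} erf(u/√2) du`. -/
noncomputable def I (x : ℝ) : ℝ :=
  ∫ u in (0 : ℝ)..x, Real.exp (u ^ 2 / 2) * erf (u / Real.sqrt 2)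

lemma continuous_erf : Continuous erf :=
  continuous_const.mul <| intervalIntegral.continuous_primitive
    (fun _ _ ↦ Continuous.intervalIntegrable (by fun_prop) _ _) 0

lemma erf_nonneg {z : ℝ} (hz : 0 ≤ z) : 0 ≤ erf z :=
  mul_nonneg (by positivity) <|
    intervalIntegral.integral_nonneg hz fun _ _ ↦ (exp_pos _).le

lemma erf_neg (z : ℝ) : erf (-z) = -erf z := by
  have h := intervalIntegral.integral_comp_neg (a := 0) (b := z) fun t ↦ exp (-t ^ 2)
  simp only [neg_sq, neg_zero] at h
  rw [erf, erf, h, intervalIntegral.integral_symm, mul_neg]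

lemma I_neg (x : ℝ) : I (-x) = I x := by
  have h := intervalIntegral.integral_comp_neg (a := 0) (b := x)
    fun u ↦ exp (u ^ 2 / 2) * erf (u / √2)
  simp only [neg_sq, neg_zero, neg_div, erf_neg, mul_neg, intervalIntegral.integral_neg] at h
  rw [I, I, intervalIntegral.integral_symm, ← h, neg_neg]

lemma I_nonneg (x : ℝ) : 0 ≤ I x := by
  wlog hx : 0 ≤ x generalizing x
  · exact I_neg x ▸ this (-x) (by linarith)
  · exact intervalIntegral.integral_nonneg hx fun u hu ↦
      mul_nonneg (exp_pos _).le (erf_nonneg (div_nonneg hu.1 (sqrt_nonneg 2)))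

lemma integral_exp_neg_mul_sq_eq_mul_erf {c : ℝ} (hc : c ≠ 0) (x : ℝ) :
    ∫ t in (0 : ℝ)..x, exp (-(c * t) ^ 2) = √π / (2 * c) * erf (c * x) := by
  rw [intervalIntegral.integral_comp_mul_left (fun t ↦ exp (-t ^ 2)) hc, mul_zero, smul_eq_mul,
    erf]
  have hπ : √π ≠ 0 := by positivity
  field_simp

-- Here and below `t / |t|` plays the role of the sign of `t`, with value `0` at `t = 0`.
lemma norm_div_abs_self_le_one (t : ℝ) : ‖t / |t|‖ ≤ 1 := by
  rw [norm_div, norm_eq_abs, norm_eq_abs, abs_abs]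
  exact div_self_le_one _

lemma integral_sub_div_abs_sub_mul {f : ℝ → ℝ} (hf : Integrable f) (c : ℝ) :
    ∫ t, (t - c) / |t - c| * f t = (∫ t in Set.Ioi c, f t) - ∫ t in Set.Iic c, f t := by
  have hint : Integrable fun t ↦ (t - c) / |t - c| * f t :=
    hf.bdd_mul (c := 1) (Measurable.aestronglyMeasurable (by fun_prop))
      (ae_of_all _ fun t ↦ norm_div_abs_self_le_one (t - c))
  have hIoi : ∫ t in Set.Ioi c, (t - c) / |t - c| * f t = ∫ t in Set.Ioi c, f t :=
    setIntegral_congr_fun measurableSet_Ioi fun t ht ↦ by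
      have ht : 0 < t - c := sub_pos.2 ht
      simp only [abs_of_pos ht, div_self ht.ne', one_mul]
  have hIio : ∫ t in Set.Iio c, (t - c) / |t - c| * f t = ∫ t in Set.Iio c, -f t :=
    setIntegral_congr_fun measurableSet_Iio fun t ht ↦ by
      have ht : t - c < 0 := sub_neg.2 ht
      simp only [abs_of_neg ht, div_neg, div_self ht.ne, neg_one_mul]
  rw [← intervalIntegral.integral_Iic_add_Ioi hint.integrableOn hint.integrableOn (b := c), hIoi,
    integral_Iic_eq_integral_Iio, hIio, integral_neg, integral_Iic_eq_integral_Iio]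
  ring

lemma integral_add_div_abs_add_mul_of_even {f : ℝ → ℝ} (hf : Integrable f) (heven : f.Even)
    (m : ℝ) : ∫ t, (t + m) / |t + m| * f t = 2 * ∫ t in (0 : ℝ)..m, f t := by
  have hIic : ∫ t in Set.Iic (-m), f t = ∫ t in Set.Ioi m, f t := by
    simp only [← integral_comp_neg_Ioi, heven _]
  have hneg : ∫ t in (-m)..0, f t = ∫ t in (0 : ℝ)..m, f t := by
    simpa only [heven _, neg_zero] using
      (intervalIntegral.integral_comp_neg (a := 0) (b := m) f).symm
  calc ∫ t, (t + m) / |t + m| * f t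
      = (∫ t in Set.Ioi (-m), f t) - ∫ t in Set.Ioi m, f t := by
        rw [← hIic, ← integral_sub_div_abs_sub_mul hf]
        simp only [sub_neg_eq_add]
    _ = ∫ t in (-m)..m, f t :=
        intervalIntegral.integral_Ioi_sub_Ioi' hf.integrableOn hf.integrableOn
    _ = 2 * ∫ t in (0 : ℝ)..m, f t := by
        rw [← intervalIntegral.integral_add_adjacent_intervals (b := 0) hf.intervalIntegrable
          hf.intervalIntegrable, hneg, two_mul]

lemma abs_exp_sub_exp_le (p q : ℝ) : |exp p - exp q| ≤ |p - q| * (exp p + exp q) := by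
  wlog hqp : q ≤ p generalizing p q
  · rw [abs_sub_comm, abs_sub_comm p, add_comm]
    exact this q p (not_le.1 hqp).le
  rw [abs_of_nonneg (sub_nonneg.2 (exp_le_exp.2 hqp)), abs_of_nonneg (sub_nonneg.2 hqp)]
  calc exp p - exp q = exp p * (1 - exp (q - p)) := by
        rw [mul_sub, ← exp_add, mul_one, add_sub_cancel]
    _ ≤ exp p * (p - q) :=
        mul_le_mul_of_nonneg_left (by linarith [add_one_le_exp (q - p)]) (exp_pos p).le
    _ ≤ (p - q) * (exp p + exp q) := by
        nlinarith [mul_nonneg (sub_nonneg.2 hqp) (exp_pos q).le]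

/-- The unnormalised Gaussian density of precision `a`, exponentially tilted by `s`. Precision
rather than variance is the parameter because multiplying such weights adds their precisions. -/
noncomputable def tiltedGaussian (a s t : ℝ) : ℝ := exp (s * t - a * t ^ 2 / 2)

section TiltedGaussian

variable {a b : ℝ}

lemma tiltedGaussian_pos (a s t : ℝ) : 0 < tiltedGaussian a s t := exp_pos _

@[fun_prop]
lemma continuous_tiltedGaussian (a s : ℝ) : Continuous (tiltedGaussian a s) := by
  unfold tiltedGaussian
  fun_prop

lemma hasDerivAt_tiltedGaussian (a s t : ℝ) :
    HasDerivAt (tiltedGaussian a · t) (t * tiltedGaussian a s t) s := by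
  have h := (((hasDerivAt_id s).mul_const t).sub_const (a * t ^ 2 / 2)).exp
  rwa [one_mul, mul_comm (exp _)] at h

lemma tiltedGaussian_zero_even (a : ℝ) : (tiltedGaussian a 0).Even := fun t ↦ by
  simp only [tiltedGaussian, zero_mul, neg_sq]

lemma tiltedGaussian_apply_zero (a s : ℝ) : tiltedGaussian a s 0 = 1 := by
  simp [tiltedGaussian]

lemma tiltedGaussian_mul (a s c t : ℝ) :
    tiltedGaussian a s (c * t) = tiltedGaussian (a * c ^ 2) (s * c) t := by
  simp only [tiltedGaussian, mul_pow, mul_assoc]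

lemma tendsto_tiltedGaussian_zero_atTop (ha : 0 < a) :
    Filter.Tendsto (tiltedGaussian a 0) Filter.atTop (nhds 0) := by
  have hsq : Filter.Tendsto (fun t : ℝ ↦ a * t ^ 2 / 2) Filter.atTop Filter.atTop :=
    ((Filter.tendsto_pow_atTop two_ne_zero).const_mul_atTop ha).atTop_div_const two_pos
  refine (tendsto_exp_neg_atTop_nhds_zero.comp hsq).congr fun t ↦ ?_
  simp only [Function.comp_apply, tiltedGaussian, zero_mul, zero_sub]

lemma tiltedGaussian_eq_exp_mul_comp_sub (ha : a ≠ 0) (s t : ℝ) :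
    tiltedGaussian a s t = exp (s ^ 2 / (2 * a)) * tiltedGaussian a 0 (t - s / a) := by
  rw [tiltedGaussian, tiltedGaussian, ← exp_add]
  congr 1
  field_simp
  ring

lemma tiltedGaussian_le_add {r s q : ℝ} (hrs : r ≤ s) (hsq : s ≤ q) (t : ℝ) :
    tiltedGaussian a s t ≤ tiltedGaussian a r t + tiltedGaussian a q t := by
  rcases le_total 0 t with ht | ht
  · refine le_add_of_nonneg_of_le (tiltedGaussian_pos a r t).le (exp_le_exp.2 ?_)
    gcongr
  · refine le_add_of_le_of_nonneg (exp_le_exp.2 ?_) (tiltedGaussian_pos a q t).le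
    linarith [mul_le_mul_of_nonpos_right hrs ht]

lemma integrable_tiltedGaussian (ha : 0 < a) (s : ℝ) : Integrable (tiltedGaussian a s) := by
  have h : Integrable (tiltedGaussian a 0) :=
    (integrable_exp_neg_mul_sq (half_pos ha)).congr <| ae_of_all _ fun t ↦ by
      simp only [tiltedGaussian]
      ring_nf
  rw [funext (tiltedGaussian_eq_exp_mul_comp_sub ha.ne' s)]
  exact (h.comp_sub_right (s / a)).const_mul _

lemma integrable_mul_tiltedGaussian (ha : 0 < a) (s : ℝ) :
    Integrable fun t ↦ t * tiltedGaussian a s t := by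
  have h : Integrable fun t ↦ t * tiltedGaussian a 0 t :=
    (integrable_mul_exp_neg_mul_sq (half_pos ha)).congr <| ae_of_all _ fun t ↦ by
      simp only [tiltedGaussian]
      ring_nf
  refine (((h.comp_sub_right (s / a)).const_mul (exp (s ^ 2 / (2 * a)))).add
    ((integrable_tiltedGaussian ha s).const_mul (s / a))).congr (ae_of_all _ fun t ↦ ?_)
  simp only [Pi.add_apply, tiltedGaussian_eq_exp_mul_comp_sub ha.ne' s]
  ring

lemma norm_tiltedGaussian_sub_div_abs_le (a b s r t : ℝ) :
    ‖(tiltedGaussian a s t - tiltedGaussian b r t) / |t|‖ ≤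
      |s - r - (a - b) / 2 * t| * (tiltedGaussian a s t + tiltedGaussian b r t) := by
  have hsum : 0 ≤ tiltedGaussian a s t + tiltedGaussian b r t :=
    add_nonneg (tiltedGaussian_pos a s t).le (tiltedGaussian_pos b r t).le
  rw [norm_div, norm_eq_abs, norm_eq_abs, abs_abs]
  refine div_le_of_le_mul₀ (abs_nonneg t) (by positivity) ?_
  calc |tiltedGaussian a s t - tiltedGaussian b r t|
      ≤ |s * t - a * t ^ 2 / 2 - (r * t - b * t ^ 2 / 2)| *
          (tiltedGaussian a s t + tiltedGaussian b r t) := abs_exp_sub_exp_le _ _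
    _ = |(s - r - (a - b) / 2 * t) * t| *
          (tiltedGaussian a s t + tiltedGaussian b r t) := by ring_nf
    _ = |s - r - (a - b) / 2 * t| * (tiltedGaussian a s t + tiltedGaussian b r t) * |t| := by
        rw [abs_mul, mul_right_comm]

lemma integrable_tiltedGaussian_sub_div_abs (ha : 0 < a) (hb : 0 < b) (s r : ℝ) :
    Integrable fun t ↦ (tiltedGaussian a s t - tiltedGaussian b r t) / |t| := by
  have hsum := (integrable_tiltedGaussian ha s).add (integrable_tiltedGaussian hb r)
  have hmul := (integrable_mul_tiltedGaussian ha s).add (integrable_mul_tiltedGaussian hb r)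
  have hbound : Integrable fun t ↦
      (s - r - (a - b) / 2 * t) * (tiltedGaussian a s t + tiltedGaussian b r t) := by
    refine ((hsum.const_mul (s - r)).sub (hmul.const_mul ((a - b) / 2))).congr
      (ae_of_all _ fun t ↦ ?_)
    simp only [Pi.sub_apply, Pi.add_apply]
    ring
  refine hbound.mono (Measurable.aestronglyMeasurable (by fun_prop)) (ae_of_all _ fun t ↦ ?_)
  rw [norm_mul, norm_eq_abs (_ - _), norm_of_nonneg
    (add_nonneg (tiltedGaussian_pos a s t).le (tiltedGaussian_pos b r t).le)]
  exact norm_tiltedGaussian_sub_div_abs_le a b s r t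

lemma hasDerivAt_integral_tiltedGaussian_sub_div_abs (ha : 0 < a) (hb : 0 < b) (s r : ℝ) :
    HasDerivAt (fun s ↦ ∫ t, (tiltedGaussian a s t - tiltedGaussian b r t) / |t|)
      (∫ t, t / |t| * tiltedGaussian a s t) s := by
  refine (hasDerivAt_integral_of_dominated_loc_of_deriv_le
    (F := fun s t ↦ (tiltedGaussian a s t - tiltedGaussian b r t) / |t|)
    (F' := fun s t ↦ t / |t| * tiltedGaussian a s t)
    (bound := fun t ↦ tiltedGaussian a (s - 1) t + tiltedGaussian a (s + 1) t)
    (Icc_mem_nhds (sub_one_lt s) (lt_add_one s)) (.of_forall fun x ↦ ?_)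
    (integrable_tiltedGaussian_sub_div_abs ha hb s r) ?_ (ae_of_all _ fun t x hx ↦ ?_)
    ((integrable_tiltedGaussian ha _).add (integrable_tiltedGaussian ha _))
    (ae_of_all _ fun t x _ ↦ ?_)).2
  · exact (integrable_tiltedGaussian_sub_div_abs ha hb x r).aestronglyMeasurable
  · exact Measurable.aestronglyMeasurable (by fun_prop)
  · rw [norm_mul, norm_of_nonneg (tiltedGaussian_pos a x t).le]
    exact (mul_le_of_le_one_left (tiltedGaussian_pos a x t).le (norm_div_abs_self_le_one t)).trans
      (tiltedGaussian_le_add hx.1 hx.2 t)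
  · rw [div_mul_eq_mul_div]
    exact ((hasDerivAt_tiltedGaussian a x t).sub_const _).div_const _

lemma two_mul_integral_tiltedGaussian_zero (ha : 0 < a) (x : ℝ) :
    2 * ∫ t in (0 : ℝ)..x, tiltedGaussian a 0 t = √(2 * π) / √a * erf (√a * x / √2) := by
  have hc : √a / √2 ≠ 0 := by positivity
  have hsq (t : ℝ) : tiltedGaussian a 0 t = exp (-(√a / √2 * t) ^ 2) := by
    rw [tiltedGaussian, mul_pow, div_pow, sq_sqrt ha.le, sq_sqrt zero_le_two]
    ring_nf
  simp only [hsq]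
  rw [integral_exp_neg_mul_sq_eq_mul_erf hc, sqrt_mul zero_le_two, div_mul_eq_mul_div]
  field_simp

lemma integral_div_abs_mul_tiltedGaussian (ha : 0 < a) (s : ℝ) :
    ∫ t, t / |t| * tiltedGaussian a s t =
      √(2 * π) / √a * (exp ((s / √a) ^ 2 / 2) * erf (s / √a / √2)) := by
  have hsa : √a * (s / a) = s / √a := by
    rw [mul_div_left_comm, sqrt_div_self', mul_one_div]
  calc ∫ t, t / |t| * tiltedGaussian a s t
      = ∫ t, (t + s / a) / |t + s / a| * tiltedGaussian a s (t + s / a) :=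
        (integral_add_right_eq_self (fun t ↦ t / |t| * tiltedGaussian a s t) (s / a)).symm
    _ = exp (s ^ 2 / (2 * a)) * ∫ t, (t + s / a) / |t + s / a| * tiltedGaussian a 0 t := by
        simp only [tiltedGaussian_eq_exp_mul_comp_sub ha.ne' s, add_sub_cancel_right,
          mul_left_comm _ (exp _), integral_const_mul]
    _ = exp (s ^ 2 / (2 * a)) * (√(2 * π) / √a * erf (s / √a / √2)) := by
        rw [integral_add_div_abs_add_mul_of_even (integrable_tiltedGaussian ha 0)
          (tiltedGaussian_zero_even a), two_mul_integral_tiltedGaussian_zero ha, hsa]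
    _ = √(2 * π) / √a * (exp ((s / √a) ^ 2 / 2) * erf (s / √a / √2)) := by
        rw [mul_left_comm, div_pow, sq_sqrt ha.le, div_div (s ^ 2), mul_comm a]

lemma integral_tiltedGaussian_zero_sub_div_abs (ha : 0 < a) (hb : 0 < b) :
    ∫ t, (tiltedGaussian a 0 t - tiltedGaussian b 0 t) / |t| = log (b / a) := by
  have hzero : Filter.Tendsto (tiltedGaussian 1 0) (nhdsWithin 0 (Set.Ioi 0)) (nhds 1) := by
    have h := (continuous_tiltedGaussian 1 0).tendsto 0
    rw [tiltedGaussian_apply_zero] at h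
    exact h.mono_left nhdsWithin_le_nhds
  have hpos : ∀ t ∈ Set.Ioi (0 : ℝ), (tiltedGaussian a 0 t - tiltedGaussian b 0 t) / |t| =
      t⁻¹ • (tiltedGaussian 1 0 (√a * t) - tiltedGaussian 1 0 (√b * t)) := fun t ht ↦ by
    simp only [tiltedGaussian_mul, sq_sqrt ha.le, sq_sqrt hb.le, one_mul, zero_mul,
      abs_of_pos (Set.mem_Ioi.1 ht), smul_eq_mul, div_eq_inv_mul]
  have hfrullani := Frullani.integral_Ioi_eq
    ((continuous_tiltedGaussian 1 0).locallyIntegrable.locallyIntegrableOn _)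
    (sqrt_pos.2 ha) (sqrt_pos.2 hb) hzero
    (tendsto_tiltedGaussian_zero_atTop one_pos)
    ((integrable_tiltedGaussian_sub_div_abs ha hb 0 0).integrableOn.congr_fun hpos
      measurableSet_Ioi)
  calc ∫ t, (tiltedGaussian a 0 t - tiltedGaussian b 0 t) / |t|
      = 2 * ∫ t in Set.Ioi 0, (tiltedGaussian a 0 t - tiltedGaussian b 0 t) / |t| := by
        rw [← integral_comp_abs]
        simp only [tiltedGaussian, sq_abs, abs_abs, zero_mul]
    _ = 2 * log (√b / √a) := by
        rw [setIntegral_congr_fun measurableSet_Ioi hpos, hfrullani, sub_zero, smul_eq_mul,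
          mul_one]
    _ = log (b / a) := by
        rw [← sqrt_div hb.le, log_sqrt (div_pos hb ha).le, mul_div_cancel₀ _ two_ne_zero]

lemma integral_tiltedGaussian_sub_div_abs (ha : 0 < a) (hb : 0 < b) (s : ℝ) :
    ∫ t, (tiltedGaussian a s t - tiltedGaussian b 0 t) / |t| =
      √(2 * π) * I (s / √a) + log (b / a) := by
  have hcont : Continuous fun u ↦
      √(2 * π) / √a * (exp ((u / √a) ^ 2 / 2) * erf (u / √a / √2)) := by
    have := continuous_erf
    fun_prop
  have hFTC := intervalIntegral.integral_eq_sub_of_hasDerivAt (a := 0) (b := s)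
    (fun u _ ↦ integral_div_abs_mul_tiltedGaussian ha u ▸
      hasDerivAt_integral_tiltedGaussian_sub_div_abs ha hb u 0)
    (hcont.intervalIntegrable _ _)
  have hI : ∫ u in (0 : ℝ)..s, √(2 * π) / √a * (exp ((u / √a) ^ 2 / 2) * erf (u / √a / √2)) =
      √(2 * π) * I (s / √a) := by
    have hscale := intervalIntegral.inv_smul_integral_comp_div (a := 0) (b := s)
      (fun u ↦ exp (u ^ 2 / 2) * erf (u / √2)) √a
    rw [zero_div, smul_eq_mul] at hscale
    rw [I, intervalIntegral.integral_const_mul, ← hscale, div_eq_mul_inv, mul_assoc]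
  rw [← hI, hFTC, integral_tiltedGaussian_zero_sub_div_abs ha hb, sub_add_cancel]

end TiltedGaussian

theorem gaussian_mixture_rewrite_general (S : ℝ) {v : ℝ} (hv : -1 < v) :
    Integrable (fun η : ℝ ↦ (exp (η * S - η ^ 2 * v / 2) - 1) * exp (-η ^ 2 / 2) / |η|) ∧
    (1 / √(2 * π)) * ∫ η : ℝ, (exp (η * S - η ^ 2 * v / 2) - 1) * exp (-η ^ 2 / 2) / |η| =
      I (S / √(v + 1)) - (1 / √(2 * π)) * log (1 + v) ∧
    (∀ x : ℝ, 0 ≤ I x) ∧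
    -(1 / √(2 * π)) * log (1 + v) ≤
      (1 / √(2 * π)) * ∫ η : ℝ, (exp (η * S - η ^ 2 * v / 2) - 1) * exp (-η ^ 2 / 2) / |η| := by
  have hv₁ : 0 < v + 1 := by linarith
  have hintegrand (η : ℝ) : (exp (η * S - η ^ 2 * v / 2) - 1) * exp (-η ^ 2 / 2) / |η| =
      (tiltedGaussian (v + 1) S η - tiltedGaussian 1 0 η) / |η| := by
    rw [tiltedGaussian, tiltedGaussian, sub_one_mul, ← exp_add]
    ring_nf
  have hvalue : (1 / √(2 * π)) *
      ∫ η, (tiltedGaussian (v + 1) S η - tiltedGaussian 1 0 η) / |η| =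
      I (S / √(v + 1)) - (1 / √(2 * π)) * log (1 + v) := by
    rw [integral_tiltedGaussian_sub_div_abs hv₁ one_pos, one_div (v + 1), log_inv, add_comm 1 v]
    field_simp
    ring
  simp only [hintegrand]
  refine ⟨integrable_tiltedGaussian_sub_div_abs hv₁ one_pos S 0, hvalue, I_nonneg, ?_⟩
  rw [hvalue]
  linarith [I_nonneg (S / √(v + 1))]

/-- **Rewrite of the improper-mixture supermartingale** (Lemma 9): for every
`S : ℝ` and `n : ℕ`, the integral
`(1/√(2π)) ∫_ℝ [e^{ηS - η²n/2} - 1] e^{-η²/2} dη/|η|` converges and equals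
`I(S/√(n+1)) - (1/√(2π)) ln(1+n)`; moreover `I ≥ 0`, so this quantity is at
least `-(1/√(2π)) ln(1+n)`. -/
theorem gaussian_mixture_rewrite (S : ℝ) (n : ℕ) :
    Integrable (fun η : ℝ =>
      (Real.exp (η * S - η ^ 2 * n / 2) - 1) * Real.exp (-η ^ 2 / 2) / |η|) ∧
    (1 / Real.sqrt (2 * π)) *
        ∫ η : ℝ, (Real.exp (η * S - η ^ 2 * n / 2) - 1) * Real.exp (-η ^ 2 / 2) / |η| =
      I (S / Real.sqrt (n + 1)) - (1 / Real.sqrt (2 * π)) * Real.log (1 + n) ∧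
    (∀ x : ℝ, 0 ≤ I x) ∧
    -(1 / Real.sqrt (2 * π)) * Real.log (1 + n) ≤
      (1 / Real.sqrt (2 * π)) *
        ∫ η : ℝ, (Real.exp (η * S - η ^ 2 * n / 2) - 1) * Real.exp (-η ^ 2 / 2) / |η| := by
  exact gaussian_mixture_rewrite_general S (neg_one_lt_zero.trans_le n.cast_nonneg)
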